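/- For every integer r ≥ 4, the complex group algebras ℂ[SL₂(ℤ/2^rℤ)] and ℂ[SL₂(𝔽₂[t]/(t^r))] are not isomorphic as ℂ-algebras. -/

import Mathlib

/-!
The group algebras are distinguished by their numbers of 3-dimensional irreducible characters.

Let `Γ₀` be the preimage of the upper triangular subgroup of `SL(2, 𝔽₂)`. It is a 2-group of
index 3. A `p`-group acting on a space of dimension prime to `p` has a common eigenvector, so every
3-dimensional irreducible representation is induced from a linear character of `Γ₀`. Over a local
ring of characteristic 2 with maximal ideal `(t)`, a linear character of `Γ₀` is determined by its
signs on four involutions, which leaves at most 16 characters. Over `ℤ/16` the abelianization of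
`Γ₀` is `ℤ/8 × ℤ/4`, and 28 of its 32 characters induce distinct irreducible characters; these
inflate to `ℤ/2^r` for `r ≥ 4`.
-/

open Module Matrix
open scoped commutatorElement MatrixGroups

namespace GroupAlgebraSL2

lemma map_commutatorElement_eq_one {G M : Type*} [Group G] [CommMonoid M] (χ : G →* M) (x y : G) :
    χ ⁅x, y⁆ = 1 := by
  rw [← MonoidHom.coe_toHomUnits, map_commutatorElement,
    commutatorElement_eq_one_iff_commute.mpr (Commute.all _ _), Units.val_one]

section CommonEigenvector

variable {K V P : Type*} [Field K] [AddCommGroup V] [Module K V] [Group P]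
  {p : ℕ}

lemma nontrivial_of_not_dvd_finrank (hV : ¬ p ∣ finrank K V) : Nontrivial V :=
  nontrivial_of_finrank_pos (R := K) (Nat.pos_of_ne_zero fun h ↦ hV (h ▸ dvd_zero p))

lemma exists_monoidHom_of_forall_eigenvector {ρ : Representation K P V} {v : V} (hv : v ≠ 0)
    (h : ∀ g, ∃ c : K, ρ g v = c • v) : ∃ χ : P →* K, ∀ g, ρ g v = χ g • v := by
  choose c hc using h
  refine ⟨⟨⟨c, ?_⟩, fun g h ↦ ?_⟩, hc⟩ <;> apply smul_left_injective K hv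
  · simp only [← hc, map_one, End.one_apply, one_smul]
  · simp only [← hc, map_mul, End.mul_apply, mul_smul]
    rw [hc h, map_smul, hc g, smul_comm]

variable [FiniteDimensional K V]

lemma eq_algebraMap_of_forall_commute [IsAlgClosed K] {ρ : Representation K P V}
    (hV : ¬ p ∣ finrank K V)
    (hmin : ∀ σ : Subrepresentation ρ, ¬ p ∣ finrank K σ.toSubmodule → σ.toSubmodule = ⊤)
    {f : End K V} (hf : ∀ g, Commute f (ρ g)) : ∃ c : K, f = algebraMap K (End K V) c := by
  have : Nontrivial V := nontrivial_of_not_dvd_finrank hV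
  obtain ⟨c, hc⟩ := End.exists_eigenvalue f
  set d : End K V := f - algebraMap K (End K V) c with hd
  have hdρ (g : P) : Commute d (ρ g) := (hf g).sub_left (Algebra.commutes c (ρ g))
  let ker : Subrepresentation ρ := ⟨LinearMap.ker d, fun g v hv ↦ by
    rw [LinearMap.mem_ker] at hv ⊢
    rw [← End.mul_apply, (hdρ g).eq, End.mul_apply, hv, map_zero]⟩
  let range : Subrepresentation ρ := ⟨LinearMap.range d, by
    rintro g _ ⟨v, rfl⟩
    exact ⟨ρ g v, by rw [← End.mul_apply, (hdρ g).eq, End.mul_apply]⟩⟩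
  have hker : LinearMap.ker d ≠ ⊥ := by
    simpa only [hd, Algebra.algebraMap_eq_smul_one, ← End.eigenspace_def] using! hc
  by_cases hrange : p ∣ finrank K (LinearMap.range d)
  · have htop : LinearMap.ker d = ⊤ := hmin ker fun h ↦ hV <| by
      rw [← d.finrank_range_add_finrank_ker]
      exact dvd_add hrange h
    exact ⟨c, sub_eq_zero.mp (LinearMap.ker_eq_top.mp htop)⟩
  · exact absurd (LinearMap.ker_eq_bot_iff_range_eq_top.mpr (hmin range hrange)) hker

lemma eq_one_of_det_eq_one {ρ : Representation K P V} (hp : p.Prime) (hP : IsPGroup p P)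
    (hV : ¬ p ∣ finrank K V) {g : P} {c : K} (hg : ρ g = algebraMap K (End K V) c)
    (hdet : LinearMap.det (ρ g) = 1) : c = 1 := by
  have : Nontrivial V := nontrivial_of_not_dvd_finrank hV
  obtain ⟨k, hk⟩ := hP g
  have hpow : c ^ p ^ k = 1 := by
    apply FaithfulSMul.algebraMap_injective K (End K V)
    rw [map_pow, ← hg, ← map_pow, hk, map_one, map_one]
  have hdim : c ^ finrank K V = 1 := by
    rwa [hg, Algebra.algebraMap_eq_smul_one, LinearMap.det_smul, map_one, mul_one] at hdet
  have hcop : (p ^ k).gcd (finrank K V) = 1 := (hp.coprime_iff_not_dvd.mpr hV).pow_left k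
  simpa only [hcop, pow_one] using pow_gcd_eq_one.mpr ⟨hpow, hdim⟩

lemma eq_algebraMap_of_isPGroup [IsAlgClosed K] {ρ : Representation K P V} [Finite P]
    (hp : p.Prime) (hP : IsPGroup p P) (hV : ¬ p ∣ finrank K V)
    (hmin : ∀ σ : Subrepresentation ρ, ¬ p ∣ finrank K σ.toSubmodule → σ.toSubmodule = ⊤)
    (g : P) : ∃ c : K, ρ g = algebraMap K (End K V) c := by
  have : Fact p.Prime := ⟨hp⟩
  have hcentral (n : ℕ) :
      ∀ g ∈ Subgroup.upperCentralSeries P n, ∃ c : K, ρ g = algebraMap K (End K V) c := by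
    induction n with
    | zero =>
      intro g hg
      rw [Subgroup.upperCentralSeries_zero, Subgroup.mem_bot] at hg
      exact ⟨1, by rw [hg, map_one, map_one]⟩
    | succ n ih =>
      intro g hg
      refine eq_algebraMap_of_forall_commute hV hmin fun h ↦ ?_
      obtain ⟨c, hc⟩ := ih ⁅g, h⁆ (Subgroup.mem_upperCentralSeries_succ_iff.mp hg h)
      have hdet : LinearMap.det (ρ ⁅g, h⁆) = 1 :=
        map_commutatorElement_eq_one (LinearMap.det.comp ρ) g h
      have hone : ρ ⁅g, h⁆ = 1 := by
        rw [hc, eq_one_of_det_eq_one hp hP hV hc hdet, map_one]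
      calc ρ g * ρ h = ρ ⁅g, h⁆ * (ρ h * ρ g) := by
            simp only [← map_mul, commutatorElement_def]
            congr 1
            group
        _ = ρ h * ρ g := by rw [hone, one_mul]
  obtain ⟨n, hn⟩ := hP.isNilpotent.nilpotent
  exact hcentral n g (hn ▸ Subgroup.mem_top g)

theorem exists_eigenvector_of_isPGroup [IsAlgClosed K] [Finite P] (hp : p.Prime)
    (hP : IsPGroup p P) (ρ : Representation K P V) (hV : ¬ p ∣ finrank K V) :
    ∃ v ≠ 0, ∀ g, ∃ c : K, ρ g v = c • v := by
  obtain ⟨σ, hσ, hmin⟩ := exists_minimalFor_of_wellFoundedLT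
    (fun σ : Subrepresentation ρ ↦ ¬ p ∣ finrank K σ.toSubmodule) (·.toSubmodule)
    ⟨⊤, by rwa [show (⊤ : Subrepresentation ρ).toSubmodule = ⊤ from rfl, finrank_top]⟩
  have hσmin (τ : Subrepresentation σ.toRepresentation) (hτ : ¬ p ∣ finrank K τ.toSubmodule) :
      τ.toSubmodule = ⊤ := by
    let τ' : Subrepresentation ρ := ⟨τ.toSubmodule.map σ.toSubmodule.subtype, by
      rintro g _ ⟨w, hw, rfl⟩
      exact ⟨_, τ.apply_mem_toSubmodule g hw, rfl⟩⟩
    have hle : τ'.toSubmodule ≤ σ.toSubmodule := Submodule.map_subtype_le _ _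
    have hτ' : ¬ p ∣ finrank K τ'.toSubmodule := by
      rwa [Submodule.finrank_map_subtype_eq]
    apply Submodule.map_injective_of_injective σ.toSubmodule.injective_subtype
    rw [Submodule.map_subtype_top]
    exact hle.antisymm (hmin hτ' hle)
  have : Nontrivial σ.toSubmodule := nontrivial_of_not_dvd_finrank hσ
  obtain ⟨w, hw⟩ := exists_ne (0 : σ.toSubmodule)
  refine ⟨w, by simpa using hw, fun g ↦ ?_⟩
  obtain ⟨c, hc⟩ := eq_algebraMap_of_isPGroup hp hP hσ hσmin g
  exact ⟨c, by simpa [Algebra.algebraMap_eq_smul_one] using! congr(($hc w : V))⟩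

end CommonEigenvector

section Characters

variable {ι K A B : Type*} [Fintype ι] [DecidableEq ι] [Field K] [Ring A] [Algebra K A] [Ring B]
  [Algebra K B]

variable (ι K A) in
/-- The characters of the irreducible representations of the `K`-algebra `A` on `K^ι`, for an
algebraically closed field `K`. Irreducibility is encoded, following Burnside's theorem, as
surjectivity of `A → Matrix ι ι K`. -/
def irreducibleCharacters : Set (A →ₗ[K] K) :=
  {χ | ∃ ρ : A →ₐ[K] Matrix ι ι K, Function.Surjective ρ ∧
    Matrix.traceLinearMap ι K K ∘ₗ ρ.toLinearMap = χ}

lemma encard_irreducibleCharacters_le_of_surjective {φ : A →ₐ[K] B}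
    (hφ : Function.Surjective φ) :
    (irreducibleCharacters ι K B).encard ≤ (irreducibleCharacters ι K A).encard := by
  refine Set.encard_le_encard_of_injOn (f := (· ∘ₗ φ.toLinearMap)) ?_ fun χ _ ψ _ h ↦ ?_
  · rintro _ ⟨ρ, hρ, rfl⟩
    exact ⟨ρ.comp φ, hρ.comp hφ, rfl⟩
  · exact LinearMap.cancel_right hφ |>.mp h

lemma apply_mem_range_lift {G : Type*} [Monoid G] (ρ : G →* A) (x : G) :
    ρ x ∈ (MonoidAlgebra.lift K A G ρ).range :=
  ⟨MonoidAlgebra.of K G x, MonoidAlgebra.lift_of _ _⟩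

theorem mapDomainAlgHom_surjective {G H K : Type*} [Monoid G] [Monoid H] [CommSemiring K]
    {f : G →* H} (hf : Function.Surjective f) :
    Function.Surjective (MonoidAlgebra.mapDomainAlgHom K K f) := by
  intro b
  induction b using MonoidAlgebra.induction_linear with
  | zero => exact ⟨0, map_zero _⟩
  | add b c hb hc =>
    obtain ⟨⟨b, rfl⟩, c, rfl⟩ := hb, hc
    exact ⟨b + c, map_add _ b c⟩
  | single y r =>
    obtain ⟨x, rfl⟩ := hf y
    exact ⟨.single x r, MonoidAlgebra.mapDomain_single⟩

end Characters

section Induction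

variable {G ι K : Type*} [Group G] {P : Subgroup G} {g : ι → G}

/-- A family `g` of representatives of the left cosets of `P`, one for each coset: the indexed
counterpart of `Subgroup.IsComplement`. -/
def IsLeftTransversal (P : Subgroup G) (g : ι → G) : Prop :=
  ∀ x, ∃! i, (g i)⁻¹ * x ∈ P

lemma IsLeftTransversal.inv_mul_mem_iff (hg : IsLeftTransversal P g) {i j : ι} :
    (g i)⁻¹ * g j ∈ P ↔ i = j :=
  ⟨fun h ↦ (hg (g j)).unique h (by simp), by rintro rfl; simp⟩

section ExtendByZero

variable [MonoidWithZero K]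

open Classical in
/-- The extension of a character `χ` of the subgroup `P` to a function on `G` vanishing
outside `P`. -/
noncomputable def extendByZero (χ : P →* K) (x : G) : K :=
  if hx : x ∈ P then χ ⟨x, hx⟩ else 0

lemma extendByZero_of_mem (χ : P →* K) {x : G} (hx : x ∈ P) : extendByZero χ x = χ ⟨x, hx⟩ :=
  dif_pos hx

lemma extendByZero_of_notMem (χ : P →* K) {x : G} (hx : x ∉ P) : extendByZero χ x = 0 :=
  dif_neg hx

lemma extendByZero_mul (χ : P →* K) (x : G) {y : G} (hy : y ∈ P) :
    extendByZero χ (x * y) = extendByZero χ x * χ ⟨y, hy⟩ := by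
  by_cases hx : x ∈ P
  · rw [extendByZero_of_mem χ hx, extendByZero_of_mem χ (mul_mem hx hy), ← map_mul]
    rfl
  · rw [extendByZero_of_notMem χ hx,
      extendByZero_of_notMem χ ((Subgroup.mul_mem_cancel_right P hy).not.mpr hx), zero_mul]

lemma IsLeftTransversal.extendByZero_inv_mul [DecidableEq ι] (hg : IsLeftTransversal P g)
    (χ : P →* K) (i j : ι) : extendByZero χ ((g i)⁻¹ * g j) = if i = j then 1 else 0 := by
  split_ifs with hij
  · subst hij
    rw [inv_mul_cancel, extendByZero_of_mem χ P.one_mem]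
    exact map_one χ
  · exact extendByZero_of_notMem χ (hg.inv_mul_mem_iff.not.mpr hij)

end ExtendByZero

variable [Fintype ι] [DecidableEq ι]

/-- The monomial matrix representation of `G` induced from the character `χ` of `P`, with respect
to the transversal `g`. -/
noncomputable def inducedRep [Semiring K] (hg : IsLeftTransversal P g) (χ : P →* K) :
    G →* Matrix ι ι K where
  toFun x := Matrix.of fun i j ↦ extendByZero χ ((g i)⁻¹ * x * g j)
  map_one' := by
    ext i j
    rw [Matrix.of_apply, mul_one, hg.extendByZero_inv_mul, Matrix.one_apply]
  map_mul' x y := by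
    ext i j
    obtain ⟨k, hk, hk_unique⟩ := hg (y * g j)
    rw [Matrix.mul_apply, Finset.sum_eq_single k]
    · have hxy : (g i)⁻¹ * (x * y) * g j = (g i)⁻¹ * x * g k * ((g k)⁻¹ * (y * g j)) := by group
      simp only [Matrix.of_apply, hxy, mul_assoc (g k)⁻¹, extendByZero_mul χ _ hk,
        extendByZero_of_mem χ hk]
    · intro l _ hl
      rw [Matrix.of_apply, Matrix.of_apply, mul_assoc (g l)⁻¹,
        extendByZero_of_notMem χ (x := (g l)⁻¹ * _) (mt (hk_unique l) hl), mul_zero]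
    · simp

lemma inducedRep_apply [Semiring K] (hg : IsLeftTransversal P g) (χ : P →* K) (x : G) (i j : ι) :
    inducedRep hg χ x i j = extendByZero χ ((g i)⁻¹ * x * g j) :=
  rfl

variable [Field K]

/-- The matrix whose columns are the vectors `ρ (g j) v`. When `v` is a `P`-eigenvector and `g` is a
transversal, it intertwines the induced representation with `ρ`. -/
def orbitMatrix (ρ : G →* Matrix ι ι K) (g : ι → G) (v : ι → K) : Matrix ι ι K :=
  Matrix.of fun i j ↦ (ρ (g j) *ᵥ v) i

lemma mul_orbitMatrix (hg : IsLeftTransversal P g) {χ : P →* K} {ρ : G →* Matrix ι ι K}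
    {v : ι → K} (hv : ∀ p : P, ρ p *ᵥ v = χ p • v) (x : G) :
    ρ x * orbitMatrix ρ g v = orbitMatrix ρ g v * inducedRep hg χ x := by
  ext i j
  obtain ⟨k, hk, hk_unique⟩ := hg (x * g j)
  have hxj : x * g j = g k * ((g k)⁻¹ * (x * g j)) := by group
  rw [mul_apply (M := orbitMatrix ρ g v), Finset.sum_eq_single k]
  · change (ρ x *ᵥ (ρ (g j) *ᵥ v)) i = (ρ (g k) *ᵥ v) i * extendByZero χ ((g k)⁻¹ * x * g j)
    rw [mulVec_mulVec, ← map_mul, hxj, map_mul, ← mulVec_mulVec, mul_assoc,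
      extendByZero_of_mem χ hk, hv ⟨_, hk⟩, mulVec_smul, Pi.smul_apply, smul_eq_mul, mul_comm]
  · intro l _ hl
    rw [inducedRep_apply, mul_assoc (g l)⁻¹,
      extendByZero_of_notMem χ (x := (g l)⁻¹ * _) (mt (hk_unique l) hl), mul_zero]
  · simp

lemma isUnit_orbitMatrix (hg : IsLeftTransversal P g) {χ : P →* K} {ρ : G →* Matrix ι ι K}
    (hρ : Function.Surjective (MonoidAlgebra.lift K _ G ρ)) {v : ι → K} (hv₀ : v ≠ 0)
    (hv : ∀ p : P, ρ p *ᵥ v = χ p • v) : IsUnit (orbitMatrix ρ g v) := by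
  have horbit (x : G) : ρ x *ᵥ v ∈ LinearMap.range (orbitMatrix ρ g v).mulVecLin := by
    obtain ⟨k, hk, -⟩ := hg x
    refine ⟨χ ⟨_, hk⟩ • Pi.single k 1, ?_⟩
    rw [mulVecLin_apply, mulVec_smul, mulVec_single_one]
    change _ • (ρ (g k) *ᵥ v) = _
    rw [← mulVec_smul, ← hv, mulVec_mulVec, ← map_mul, mul_inv_cancel_left]
  have hspan (a : MonoidAlgebra K G) :
      MonoidAlgebra.lift K _ G ρ a *ᵥ v ∈ LinearMap.range (orbitMatrix ρ g v).mulVecLin := by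
    induction a using MonoidAlgebra.induction_linear with
    | zero => simp
    | add a b ha hb => rw [map_add, add_mulVec]; exact add_mem ha hb
    | single x c =>
      rw [MonoidAlgebra.lift_single, smul_mulVec]
      exact Submodule.smul_mem _ _ (horbit x)
  rw [← mulVec_surjective_iff_isUnit]
  intro w
  obtain ⟨i, hi⟩ := Function.ne_iff.mp hv₀
  obtain ⟨a, ha⟩ := hρ (vecMulVec w (Pi.single i (v i)⁻¹))
  have hw : w = MonoidAlgebra.lift K _ G ρ a *ᵥ v := by
    rw [ha, vecMulVec_mulVec, single_dotProduct, inv_mul_cancel₀ hi, MulOpposite.op_one, one_smul]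
  rw [hw]
  exact hspan a

/-- The character of the representation induced from `χ`. -/
noncomputable def inducedCharacter (hg : IsLeftTransversal P g) (χ : P →* K) :
    MonoidAlgebra K G →ₗ[K] K :=
  traceLinearMap ι K K ∘ₗ (MonoidAlgebra.lift K _ G (inducedRep hg χ)).toLinearMap

lemma inducedCharacter_of (hg : IsLeftTransversal P g) (χ : P →* K) (x : G) :
    inducedCharacter hg χ (MonoidAlgebra.of K G x) = ∑ i, extendByZero χ ((g i)⁻¹ * x * g i) := by
  simp [inducedCharacter, trace, inducedRep_apply]

lemma trace_comp_eq_inducedCharacter (hg : IsLeftTransversal P g) {χ : P →* K}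
    {ρ : MonoidAlgebra K G →ₐ[K] Matrix ι ι K} (hρ : Function.Surjective ρ) {v : ι → K}
    (hv₀ : v ≠ 0) (hv : ∀ p : P, ρ (MonoidAlgebra.of K G p) *ᵥ v = χ p • v) :
    traceLinearMap ι K K ∘ₗ ρ.toLinearMap = inducedCharacter hg χ := by
  obtain ⟨ρ, rfl⟩ := (MonoidAlgebra.lift K _ G).surjective ρ
  simp only [MonoidAlgebra.lift_of] at hv
  obtain ⟨B, hB⟩ := isUnit_orbitMatrix hg hρ hv₀ hv
  ext x
  have hconj : ρ x = B * inducedRep hg χ x * (B⁻¹ : (Matrix ι ι K)ˣ) := by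
    rw [Units.eq_mul_inv_iff_mul_eq, hB, mul_orbitMatrix hg hv]
  simp [inducedCharacter, hconj, trace_units_conj, -coe_units_inv]

theorem irreducibleCharacters_subset_range_inducedCharacter [IsAlgClosed K] [Finite P] {p : ℕ}
    (hp : p.Prime) (hP : IsPGroup p P) (hι : ¬ p ∣ Fintype.card ι) (hg : IsLeftTransversal P g) :
    irreducibleCharacters ι K (MonoidAlgebra K G) ⊆ Set.range (inducedCharacter hg) := by
  rintro _ ⟨ρ, hρ, rfl⟩
  let ρP : Representation K P (ι → K) := toLinAlgEquiv'.toAlgHom.toMonoidHom.comp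
    ((ρ : MonoidAlgebra K G →* Matrix ι ι K).comp ((MonoidAlgebra.of K G).comp P.subtype))
  obtain ⟨v, hv₀, hv⟩ := exists_eigenvector_of_isPGroup hp hP ρP (by rwa [finrank_pi])
  obtain ⟨χ, hχ⟩ := exists_monoidHom_of_forall_eigenvector hv₀ hv
  exact ⟨χ, (trace_comp_eq_inducedCharacter hg hρ hv₀ hχ).symm⟩

lemma lift_inducedRep_surjective (hg : IsLeftTransversal P g) (χ : P →* K) {i₀ : ι}
    (h : single i₀ i₀ 1 ∈ (MonoidAlgebra.lift K _ G (inducedRep hg χ)).range) :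
    Function.Surjective (MonoidAlgebra.lift K _ G (inducedRep hg χ)) := by
  have hcol (i : ι) : (inducedRep hg χ (g i * (g i₀)⁻¹)).col i₀ = Pi.single i 1 := by
    ext k
    rw [col_apply, inducedRep_apply, ← mul_assoc, inv_mul_cancel_right, hg.extendByZero_inv_mul,
      Pi.single_apply]
  have hrow (j : ι) : (inducedRep hg χ (g i₀ * (g j)⁻¹)).row i₀ = Pi.single j 1 := by
    ext l
    simp only [row_apply, inducedRep_apply, inv_mul_cancel_left, hg.extendByZero_inv_mul,
      Pi.single_apply, eq_comm]
  have hmem := apply_mem_range_lift (K := K) (inducedRep hg χ)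
  have hsingle (i j : ι) : single i j 1 =
      inducedRep hg χ (g i * (g i₀)⁻¹) * single i₀ i₀ 1 * inducedRep hg χ (g i₀ * (g j)⁻¹) := by
    rw [single_eq_single_vecMulVec_single i₀, mul_vecMulVec, vecMulVec_mul, mulVec_single_one,
      single_one_vecMul, hcol, hrow, ← single_eq_single_vecMulVec_single]
  rw [← AlgHom.range_eq_top, eq_top_iff]
  intro M _
  rw [matrix_eq_sum_single M]
  refine sum_mem fun i _ ↦ sum_mem fun j _ ↦ ?_
  rw [← mul_one (M i j), ← smul_eq_mul, ← smul_single, hsingle]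
  exact Subalgebra.smul_mem _ (mul_mem (mul_mem (hmem _) h) (hmem _)) _

theorem inducedCharacter_mem_irreducibleCharacters (hg : IsLeftTransversal P g) {χ : P →* K}
    {x : G} {i₀ : ι} {a b : K} (hab : a ≠ b)
    (hx : inducedRep hg χ x = diagonal (Function.update (fun _ ↦ b) i₀ a)) :
    inducedCharacter hg χ ∈ irreducibleCharacters ι K (MonoidAlgebra K G) := by
  refine ⟨_, lift_inducedRep_surjective hg χ (i₀ := i₀) ?_, rfl⟩
  have hsingle : single i₀ i₀ 1 = (a - b)⁻¹ • (inducedRep hg χ x - algebraMap K _ b) := by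
    rw [hx, algebraMap_eq_diagonal, diagonal_sub, ← diagonal_smul, ← diagonal_single]
    congr 1
    ext i
    obtain rfl | hi := eq_or_ne i i₀
    · simp [inv_mul_cancel₀ (sub_ne_zero.mpr hab)]
    · simp [hi]
  rw [hsingle]
  exact Subalgebra.smul_mem _ (sub_mem (apply_mem_range_lift _ _) (algebraMap_mem _ _)) _

end Induction

section SL2

variable {R S : Type*} [CommRing R] [CommRing S]

/-- The upper unitriangular matrix `1 b; 0 1`. -/
def upper (b : R) : SL(2, R) := Matrix.SpecialLinearGroup.transvection zero_ne_one b

/-- The lower unitriangular matrix `1 0; c 1`. -/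
def lower (c : R) : SL(2, R) := Matrix.SpecialLinearGroup.transvection one_ne_zero c

/-- The diagonal matrix with entries `a` and `a⁻¹`. -/
def diag (a : Rˣ) : SL(2, R) := ⟨!![a, 0; 0, (a⁻¹ : Rˣ)], by simp⟩

@[simp]
lemma coe_upper (b : R) : (upper b : Matrix (Fin 2) (Fin 2) R) = !![1, b; 0, 1] := by
  ext i j
  fin_cases i <;> fin_cases j <;> simp [upper, Matrix.SpecialLinearGroup.transvection_coe]

@[simp]
lemma coe_lower (c : R) : (lower c : Matrix (Fin 2) (Fin 2) R) = !![1, 0; c, 1] := by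
  ext i j
  fin_cases i <;> fin_cases j <;> simp [lower, Matrix.SpecialLinearGroup.transvection_coe]

@[simp]
lemma coe_diag (a : Rˣ) : (diag a : Matrix (Fin 2) (Fin 2) R) = !![↑a, 0; 0, ↑a⁻¹] :=
  rfl

lemma upper_add (b b' : R) : upper (b + b') = upper b * upper b' :=
  Matrix.SpecialLinearGroup.transvection_add _ b b'

lemma lower_add (c c' : R) : lower (c + c') = lower c * lower c' :=
  Matrix.SpecialLinearGroup.transvection_add _ c c'

lemma upper_zero : upper (0 : R) = 1 :=
  Matrix.SpecialLinearGroup.transvection_coeff_zero _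

lemma lower_zero : lower (0 : R) = 1 :=
  Matrix.SpecialLinearGroup.transvection_coeff_zero _

lemma upper_neg (b : R) : upper (-b) = (upper b)⁻¹ :=
  (Matrix.SpecialLinearGroup.transvection_inv _ b).symm

lemma lower_neg (c : R) : lower (-c) = (lower c)⁻¹ :=
  (Matrix.SpecialLinearGroup.transvection_inv _ c).symm

lemma commutator_diag_upper (a : Rˣ) (x : R) :
    ⁅diag a, upper x⁆ = upper ((a ^ 2 - 1) * x) := by
  have hconj : diag a * upper x = upper (a ^ 2 * x) * diag a := by
    refine Subtype.ext ?_
    simp [pow_two, mul_comm, mul_assoc]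
  rw [commutatorElement_def, hconj, mul_inv_cancel_right, ← upper_neg, ← upper_add]
  ring_nf

lemma commutator_diag_inv_lower (a : Rˣ) (y : R) :
    ⁅(diag a)⁻¹, lower y⁆ = lower ((a ^ 2 - 1) * y) := by
  have hconj : lower y * diag a = diag a * lower (a ^ 2 * y) := by
    refine Subtype.ext ?_
    simp [pow_two, mul_comm, mul_assoc]
  rw [commutatorElement_def, inv_inv, mul_assoc _ (lower y), hconj, inv_mul_cancel_left,
    ← lower_neg, ← lower_add]
  ring_nf

lemma mul_apply_zero_zero (g h : SL(2, R)) : (g * h) 0 0 = g 0 0 * h 0 0 + g 0 1 * h 1 0 := by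
  rw [Matrix.SpecialLinearGroup.coe_mul, Matrix.mul_apply, Fin.sum_univ_two]

lemma mul_apply_zero_one (g h : SL(2, R)) : (g * h) 0 1 = g 0 0 * h 0 1 + g 0 1 * h 1 1 := by
  rw [Matrix.SpecialLinearGroup.coe_mul, Matrix.mul_apply, Fin.sum_univ_two]

lemma mul_apply_one_zero (g h : SL(2, R)) : (g * h) 1 0 = g 1 0 * h 0 0 + g 1 1 * h 1 0 := by
  rw [Matrix.SpecialLinearGroup.coe_mul, Matrix.mul_apply, Fin.sum_univ_two]

lemma det_fin_two_eq_one (g : SL(2, R)) : g 0 0 * g 1 1 - g 0 1 * g 1 0 = 1 := by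
  rw [← Matrix.det_fin_two, Matrix.SpecialLinearGroup.det_coe]

lemma eq_lower_mul_upper_mul_lower_mul_upper (g : SL(2, R)) (u : Rˣ) (hu : g 0 0 = u) :
    g = lower (↑u⁻¹ * (g 1 0 - (u - 1))) * upper 1 * lower (u - 1 : R) *
      upper (↑u⁻¹ * (g 0 1 - 1)) := by
  have hdet := det_fin_two_eq_one g
  have hinv : (u : R) * ↑u⁻¹ = 1 := u.mul_inv
  rw [hu] at hdet
  ext i j
  fin_cases i <;> fin_cases j <;> simp [hu]
  · linear_combination -(g 1 0 - (u - 1)) * hinv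
  · linear_combination (u⁻¹ : Rˣ) * hdet +
      (1 - g 1 1 - (g 1 0 - (u - 1)) * (u⁻¹ : Rˣ) * (g 0 1 - 1)) * hinv

lemma mem_of_upper_mem_of_lower_mem {E : Subgroup SL(2, R)} {I : Ideal R}
    (hU : ∀ b, upper b ∈ E) (hL : ∀ c ∈ I, lower c ∈ E) {g : SL(2, R)} (hu : IsUnit (g 0 0))
    (h₀₀ : g 0 0 - 1 ∈ I) (h₁₀ : g 1 0 ∈ I) : g ∈ E := by
  obtain ⟨u, hu⟩ := hu
  rw [← hu] at h₀₀
  rw [eq_lower_mul_upper_mul_lower_mul_upper g u hu.symm]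
  exact mul_mem (mul_mem (mul_mem (hL _ (I.mul_mem_left _ (sub_mem h₁₀ h₀₀))) (hU _)) (hL _ h₀₀))
    (hU _)

lemma map_upper (θ : R →+* S) (b : R) :
    Matrix.SpecialLinearGroup.map θ (upper b) = upper (θ b) := by
  ext i j
  fin_cases i <;> fin_cases j <;> simp

lemma map_lower (θ : R →+* S) (c : R) :
    Matrix.SpecialLinearGroup.map θ (lower c) = lower (θ c) := by
  ext i j
  fin_cases i <;> fin_cases j <;> simp

theorem map_surjective_of_isLocalRing [IsLocalRing S] {θ : R →+* S}
    (hθ : Function.Surjective θ) :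
    Function.Surjective (Matrix.SpecialLinearGroup.map (n := Fin 2) θ) := by
  rw [← MonoidHom.range_eq_top, eq_top_iff]
  have hU (b : S) : upper b ∈ (Matrix.SpecialLinearGroup.map (n := Fin 2) θ).range := by
    obtain ⟨b, rfl⟩ := hθ b
    exact ⟨upper b, map_upper θ b⟩
  have hL (c : S) : lower c ∈ (Matrix.SpecialLinearGroup.map (n := Fin 2) θ).range := by
    obtain ⟨c, rfl⟩ := hθ c
    exact ⟨lower c, map_lower θ c⟩
  have hmem {g : SL(2, S)} (hg : IsUnit (g 0 0)) :
      g ∈ (Matrix.SpecialLinearGroup.map (n := Fin 2) θ).range :=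
    mem_of_upper_mem_of_lower_mem (I := ⊤) hU (fun c _ ↦ hL c) hg trivial trivial
  intro g _
  by_cases ha : IsUnit (g 0 0)
  · exact hmem ha
  have hc : IsUnit (g 1 0) := by
    obtain ⟨x, y, hxy⟩ := Matrix.SpecialLinearGroup.isCoprime_col g 0
    refine isUnit_of_mul_isUnit_right (x := y) ?_
    refine (IsLocalRing.isUnit_or_isUnit_of_add_one hxy).resolve_left fun hx ↦ ?_
    exact ha (isUnit_of_mul_isUnit_right hx)
  rw [← Subgroup.mul_mem_cancel_left _ (hU 1)]
  apply hmem
  have hsum : (upper 1 * g : SL(2, S)) 0 0 + -g 0 0 = g 1 0 := by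
    rw [mul_apply_zero_zero, coe_upper]
    simp
  refine (IsLocalRing.isUnit_or_isUnit_of_isUnit_add (hsum ▸ hc)).resolve_right ?_
  rwa [IsUnit.neg_iff]

end SL2

section Gamma0

variable {R S : Type*} [CommRing R] [CommRing S]

/-- The preimage of the upper triangular Borel subgroup under the reduction
`SL(2, R) → SL(2, S)` along `π`. -/
def Gamma0 (π : R →+* S) : Subgroup SL(2, R) where
  carrier := {g | π (g 1 0) = 0}
  one_mem' := by simp
  mul_mem' {g h} hg hh := by
    simp_all [mul_apply_one_zero]
  inv_mem' {g} hg := by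
    simp_all [Matrix.SpecialLinearGroup.coe_inv, adjugate_fin_two]

lemma mem_Gamma0 {π : R →+* S} {g : SL(2, R)} : g ∈ Gamma0 π ↔ π (g 1 0) = 0 :=
  Iff.rfl

lemma upper_mem_Gamma0 (π : R →+* S) (b : R) : upper b ∈ Gamma0 π := by
  simp [mem_Gamma0]

lemma lower_mem_Gamma0 {π : R →+* S} {c : R} : lower c ∈ Gamma0 π ↔ π c = 0 := by
  simp [mem_Gamma0]

lemma diag_mem_Gamma0 (π : R →+* S) (a : Rˣ) : diag a ∈ Gamma0 π := by
  simp [mem_Gamma0]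

lemma inv_mul_apply_one_zero (g h : SL(2, R)) :
    (g⁻¹ * h) 1 0 = g 0 0 * h 1 0 - g 1 0 * h 0 0 := by
  rw [mul_apply_one_zero, Matrix.SpecialLinearGroup.coe_inv, adjugate_fin_two]
  simp [sub_eq_neg_add]

/-- Representatives of the left cosets of `Gamma0 π` for `π : R → 𝔽₂`, that is, of the points of
the projective line over `𝔽₂`. -/
def cosetRep (R : Type*) [CommRing R] : Fin 3 → SL(2, R) :=
  ![1, ⟨!![0, -1; 1, 0], by simp⟩, lower 1]

lemma isLeftTransversal_cosetRep (π : R →+* ZMod 2) :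
    IsLeftTransversal (Gamma0 π) (cosetRep R) := by
  intro x
  have hentry (i : Fin 3) : π (((cosetRep R i)⁻¹ * x : SL(2, R)) 1 0) =
      ![π (x 1 0), -π (x 0 0), π (x 1 0) - π (x 0 0)] i := by
    rw [inv_mul_apply_one_zero]
    fin_cases i <;> simp [cosetRep]
  have hcol : π (x 0 0) ≠ 0 ∨ π (x 1 0) ≠ 0 := by
    have hdet := congr(π $(det_fin_two_eq_one x))
    by_contra! h
    simp [h] at hdet
  have hF₂ : ∀ a c : ZMod 2, a ≠ 0 ∨ c ≠ 0 → ∃! i : Fin 3, ![c, -a, c - a] i = 0 := by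
    simp only [ExistsUnique]
    decide
  simpa only [mem_Gamma0, hentry] using hF₂ _ _ hcol

lemma apply_zero_zero_of_mem_Gamma0 {π : R →+* ZMod 2} {g : SL(2, R)} (hg : g ∈ Gamma0 π) :
    π (g 0 0) = 1 ∧ π (g 1 1) = 1 := by
  have hdet := congr(π $(det_fin_two_eq_one g))
  rw [mem_Gamma0] at hg
  simp only [map_sub, map_mul, hg, mul_zero, sub_zero, map_one] at hdet
  have hF₂ : ∀ a d : ZMod 2, a * d = 1 → a = 1 ∧ d = 1 := by decide
  exact hF₂ _ _ hdet

end Gamma0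

lemma card_monoidHom_le {G K ι : Type*} [Monoid G] [CommRing K] [NoZeroDivisors K] [Fintype ι]
    (s : ι → G) (hs : ∀ i, s i ^ 2 = 1)
    (hext : ∀ χ ψ : G →* K, (∀ i, χ (s i) = ψ (s i)) → χ = ψ) :
    ENat.card (G →* K) ≤ 2 ^ Fintype.card ι := by
  have hinj : Function.Injective fun (χ : G →* K) i ↦ χ (s i) = 1 := by
    intro χ ψ h
    refine hext χ ψ fun i ↦ ?_
    have hsign (φ : G →* K) : φ (s i) = 1 ∨ φ (s i) = -1 :=
      mul_self_eq_one_iff.mp (by rw [← map_mul, ← pow_two, hs, map_one])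
    have := congrFun h i
    grind
  calc ENat.card (G →* K) ≤ ENat.card (ι → Prop) := ENat.card_le_card_of_injective hinj
    _ = _ := by simp

section LinearCharacters

variable {R : Type*} [CommRing R] {π : R →+* ZMod 2} {t : R}

lemma dvd_iff_map_eq_zero (hπ : RingHom.ker π = Ideal.span {t}) {x : R} : t ∣ x ↔ π x = 0 := by
  rw [← Ideal.mem_span_singleton, ← hπ, RingHom.mem_ker]

lemma exists_eq_mul_or_eq_one_add_mul (hπ : RingHom.ker π = Ideal.span {t}) (x : R) :
    ∃ y, x = t * y ∨ x = 1 + t * y := by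
  obtain hx | hx : π x = 0 ∨ π x = 1 := by
    generalize π x = z
    decide +revert
  · obtain ⟨y, rfl⟩ := (dvd_iff_map_eq_zero hπ).mpr hx
    exact ⟨y, .inl rfl⟩
  · obtain ⟨y, hy⟩ : t ∣ x - 1 := by
      rw [dvd_iff_map_eq_zero hπ, map_sub, hx, map_one, sub_self]
    exact ⟨y, .inr (by rw [← hy, add_sub_cancel])⟩

lemma mem_of_one_mem_of_sq_mul_mem (hπ : RingHom.ker π = Ideal.span {t}) {S : AddSubgroup R}
    (h₁ : 1 ∈ S) (ht : t ∈ S) (hsq : ∀ x, t ^ 2 * x ∈ S) (x : R) : x ∈ S := by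
  have htmul (y : R) : t * y ∈ S := by
    obtain ⟨z, rfl | rfl⟩ := exists_eq_mul_or_eq_one_add_mul hπ y
    · rw [← mul_assoc, ← pow_two]
      exact hsq z
    · rw [mul_add, mul_one, ← mul_assoc, ← pow_two]
      exact add_mem ht (hsq z)
  obtain ⟨y, rfl | rfl⟩ := exists_eq_mul_or_eq_one_add_mul hπ x
  · exact htmul y
  · exact add_mem h₁ (htmul y)

lemma upper_mem_of_commutator_le (hπ : RingHom.ker π = Ideal.span {t}) {a : Rˣ}
    (ha : (a : R) ^ 2 - 1 = t ^ 2) {E : Subgroup SL(2, R)} (hE : ⁅Gamma0 π, Gamma0 π⁆ ≤ E)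
    (h₁ : upper 1 ∈ E) (ht : upper t ∈ E) (b : R) : upper b ∈ E := by
  let S : AddSubgroup R :=
    { carrier := {b | upper b ∈ E}
      zero_mem' := by simp [upper_zero]
      add_mem' := fun hb hb' ↦ by simpa [upper_add] using mul_mem hb hb'
      neg_mem' := fun hb ↦ by simpa [upper_neg] using hb }
  refine mem_of_one_mem_of_sq_mul_mem (S := S) hπ h₁ ht (fun x ↦ hE ?_) b
  rw [← ha, ← commutator_diag_upper]
  exact Subgroup.commutator_mem_commutator (diag_mem_Gamma0 π a) (upper_mem_Gamma0 π x)

lemma lower_mem_of_commutator_le (hπ : RingHom.ker π = Ideal.span {t}) {a : Rˣ}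
    (ha : (a : R) ^ 2 - 1 = t ^ 2) {E : Subgroup SL(2, R)} (hE : ⁅Gamma0 π, Gamma0 π⁆ ≤ E)
    (ht : lower t ∈ E) (ht₂ : lower (t ^ 2) ∈ E) {c : R} (hc : π c = 0) : lower c ∈ E := by
  let S : AddSubgroup R :=
    { carrier := {c | lower (t * c) ∈ E}
      zero_mem' := by simp [lower_zero]
      add_mem' := fun hc hc' ↦ by simpa [lower_add, mul_add] using mul_mem hc hc'
      neg_mem' := fun hc ↦ by simpa [lower_neg] using hc }
  obtain ⟨c, rfl⟩ := (dvd_iff_map_eq_zero hπ).mpr hc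
  refine mem_of_one_mem_of_sq_mul_mem (S := S) hπ ?_ ?_ (fun x ↦ hE ?_) c
  · simpa [S] using ht
  · simpa [S, ← pow_two] using ht₂
  have hπt : π t = 0 := (dvd_iff_map_eq_zero hπ).mp dvd_rfl
  rw [mul_left_comm, ← ha, ← commutator_diag_inv_lower]
  exact Subgroup.commutator_mem_commutator (inv_mem (diag_mem_Gamma0 π a))
    (lower_mem_Gamma0.mpr (by rw [map_mul, hπt, zero_mul]))

lemma isUnit_apply_zero_zero (hπ : RingHom.ker π = Ideal.span {t}) (ht : IsNilpotent t)
    {g : SL(2, R)} (hg : g ∈ Gamma0 π) : IsUnit (g 0 0) := by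
  obtain ⟨x, hx⟩ : t ∣ g 0 0 - 1 := by
    rw [dvd_iff_map_eq_zero hπ, map_sub, (apply_zero_zero_of_mem_Gamma0 hg).1, map_one, sub_self]
  rw [← add_sub_cancel 1 (g 0 0), hx]
  exact IsNilpotent.isUnit_one_add ((Commute.all t x).isNilpotent_mul_right ht)

variable [CharP R 2]

lemma Gamma0_le_of_commutator_le (hπ : RingHom.ker π = Ideal.span {t}) (ht : IsNilpotent t)
    {E : Subgroup SL(2, R)} (hE : ⁅Gamma0 π, Gamma0 π⁆ ≤ E) (hu₁ : upper 1 ∈ E)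
    (hut : upper t ∈ E) (hlt : lower t ∈ E) (hlt₂ : lower (t ^ 2) ∈ E) : Gamma0 π ≤ E := by
  intro g hg
  obtain ⟨a, ha⟩ := ht.isUnit_one_add
  have hsq : (a : R) ^ 2 - 1 = t ^ 2 := by
    rw [ha]
    linear_combination t * CharTwo.two_eq_zero (R := R)
  refine mem_of_upper_mem_of_lower_mem (I := RingHom.ker π)
    (upper_mem_of_commutator_le hπ hsq hE hu₁ hut)
    (fun c ↦ lower_mem_of_commutator_le hπ hsq hE hlt hlt₂)
    (isUnit_apply_zero_zero hπ ht hg) ?_ hg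
  rw [RingHom.mem_ker, map_sub, (apply_zero_zero_of_mem_Gamma0 hg).1, map_one, sub_self]

lemma monoidHom_Gamma0_ext {M : Type*} [CommMonoid M] (hπ : RingHom.ker π = Ideal.span {t})
    (ht : IsNilpotent t) {χ ψ : Gamma0 π →* M} (s : Fin 4 → Gamma0 π)
    (hs : ∀ i, (s i : SL(2, R)) = ![upper 1, upper t, lower t, lower (t ^ 2)] i)
    (h : ∀ i, χ (s i) = ψ (s i)) : χ = ψ := by
  have hcomm : commutator (Gamma0 π) ≤ χ.eqLocus ψ := by
    rw [commutator_def, Subgroup.commutator_le]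
    intro x _ y _
    exact (map_commutatorElement_eq_one χ x y).trans (map_commutatorElement_eq_one ψ x y).symm
  have hmem (i : Fin 4) :
      ![upper 1, upper t, lower t, lower (t ^ 2)] i ∈ (χ.eqLocus ψ).map (Gamma0 π).subtype :=
    ⟨s i, h i, hs i⟩
  have hle : Gamma0 π ≤ (χ.eqLocus ψ).map (Gamma0 π).subtype := by
    refine Gamma0_le_of_commutator_le hπ ht ?_ (hmem 0) (hmem 1) (hmem 2) (hmem 3)
    rw [← Subgroup.map_subtype_commutator]
    exact Subgroup.map_mono hcomm
  ext x
  obtain ⟨y, hy, hyx⟩ := hle x.2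
  exact Subtype.ext hyx ▸ hy

lemma card_monoidHom_Gamma0_le {K : Type*} [CommRing K] [NoZeroDivisors K]
    (hπ : RingHom.ker π = Ideal.span {t}) (ht : IsNilpotent t) :
    ENat.card (Gamma0 π →* K) ≤ 16 := by
  have hπt : π t = 0 := (dvd_iff_map_eq_zero hπ).mp dvd_rfl
  let s : Fin 4 → Gamma0 π :=
    ![⟨upper 1, upper_mem_Gamma0 π 1⟩, ⟨upper t, upper_mem_Gamma0 π t⟩,
      ⟨lower t, lower_mem_Gamma0.mpr hπt⟩, ⟨lower (t ^ 2), lower_mem_Gamma0.mpr (by simp [hπt])⟩]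
  have hs (i : Fin 4) : s i ^ 2 = 1 := by
    refine Subtype.ext ?_
    fin_cases i <;>
      simp [s, pow_two, ← upper_add, ← lower_add, CharTwo.add_self_eq_zero, upper_zero, lower_zero]
  exact card_monoidHom_le s hs fun χ ψ ↦
    monoidHom_Gamma0_ext hπ ht s (fun i ↦ by fin_cases i <;> rfl)

end LinearCharacters

section CharTwo

variable {R : Type*} [CommRing R] [CharP R 2] {π : R →+* ZMod 2} {t : R}

lemma sq_eq_one_add_smul (g : SL(2, R)) : g.1 ^ 2 = 1 + (g 0 0 + g 1 1) • g.1 := by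
  have hdet := det_fin_two_eq_one g
  have htwo := CharTwo.two_eq_zero (R := R)
  rw [pow_two, eta_fin_two g.1, mul_fin_two, one_fin_two]
  ext i j
  fin_cases i <;> fin_cases j <;> simp
  · linear_combination -hdet - htwo
  · ring
  · ring
  · linear_combination -hdet - htwo

lemma exists_pow_two_pow_eq_one_of_isNilpotent_trace {g : SL(2, R)}
    (hg : IsNilpotent (g 0 0 + g 1 1)) : ∃ k, g ^ 2 ^ k = 1 := by
  obtain ⟨n, hn⟩ := hg
  have hpow : (g 0 0 + g 1 1) ^ 2 ^ n = 0 := pow_eq_zero_of_le n.lt_two_pow_self.le hn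
  refine ⟨n + 1, Subtype.ext ?_⟩
  rw [Matrix.SpecialLinearGroup.coe_pow, pow_succ', pow_mul, sq_eq_one_add_smul,
    add_pow_char_pow_of_commute, one_pow, smul_pow, hpow, zero_smul, add_zero]
  · rfl
  · exact Commute.one_left _

lemma isPGroup_Gamma0 (hπ : RingHom.ker π = Ideal.span {t}) (ht : IsNilpotent t) :
    IsPGroup 2 (Gamma0 π) := by
  rintro ⟨g, hg⟩
  obtain ⟨h₀, h₁⟩ := apply_zero_zero_of_mem_Gamma0 hg
  obtain ⟨x, hx⟩ : t ∣ g 0 0 + g 1 1 := by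
    rw [dvd_iff_map_eq_zero hπ, map_add, h₀, h₁]
    rfl
  obtain ⟨k, hk⟩ := exists_pow_two_pow_eq_one_of_isNilpotent_trace (g := g) <|
    hx ▸ (Commute.all t x).isNilpotent_mul_right ht
  exact ⟨k, Subtype.ext hk⟩

theorem encard_irreducibleCharacters_le_of_charTwo {K : Type*} [Field K] [IsAlgClosed K] [Finite R]
    (hπ : RingHom.ker π = Ideal.span {t}) (ht : IsNilpotent t) :
    (irreducibleCharacters (Fin 3) K (MonoidAlgebra K SL(2, R))).encard ≤ 16 := by
  have hcard : ¬ 2 ∣ Fintype.card (Fin 3) := by decide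
  calc (irreducibleCharacters (Fin 3) K (MonoidAlgebra K SL(2, R))).encard
      ≤ (Set.range (inducedCharacter (K := K) (isLeftTransversal_cosetRep π))).encard :=
        Set.encard_le_encard <| irreducibleCharacters_subset_range_inducedCharacter
          Nat.prime_two (isPGroup_Gamma0 hπ ht) hcard _
    _ ≤ (Set.univ : Set (Gamma0 π →* K)).encard := by
        rw [← Set.image_univ]
        exact Set.encard_image_le _ _
    _ = ENat.card (Gamma0 π →* K) := Set.encard_univ _
    _ ≤ 16 := card_monoidHom_Gamma0_le hπ ht

end CharTwo

section Sixteen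

lemma isLocalRing_zmod_sixteen : IsLocalRing (ZMod 16) := by
  have : Nontrivial (ZMod 16) := ⟨0, 1, by decide⟩
  refine .of_isUnit_or_isUnit_one_sub_self fun a ↦ ?_
  simp only [isUnit_iff_exists_inv]
  revert a
  decide

/-- The reduction modulo `2`. -/
abbrev modTwo : ZMod 16 →+* ZMod 2 := ZMod.castHom (show 2 ∣ 16 by decide) (ZMod 2)

lemma exists_eq_two_mul {x : ZMod 16} (hx : modTwo x = 0) : ∃ y, x = 2 * y := by
  decide +revert

lemma exists_eq_two_mul_add_one {x : ZMod 16} (hx : modTwo x = 1) : ∃ y, x = 2 * y + 1 := by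
  decide +revert

lemma exists_mul_add_one_eq_two_mul (x : ZMod 16) : ∃ y, x * (x + 1) = 2 * y := by
  decide +revert

lemma exists_sq_eq_eight_mul_add_one {x : ZMod 16} (hx : modTwo x = 1) :
    ∃ y, x ^ 2 = 8 * y + 1 := by
  decide +revert

/-- Twice the exponent of `upper 1` in the abelianization of `Gamma0 modTwo`, which is generated by
the classes of `upper 1` and `elliptic`, of orders `8` and `4`. Doubling embeds the exponents modulo
`8` into `ZMod 16`. -/
def expUpper (g : SL(2, ZMod 16)) : ZMod 16 :=
  2 * g 0 0 * g 0 1 + g 0 0 * g 1 0 + g 0 0 ^ 2 - 1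

/-- Minus four times the exponent of `elliptic` in the abelianization of `Gamma0 modTwo`. The factor
embeds the exponents modulo `4` into `ZMod 16`. -/
def expElliptic (g : SL(2, ZMod 16)) : ZMod 16 :=
  2 * g 0 0 * g 1 0 + 4 * (g 0 0 - 1)

/-- An element of order `4` of `Gamma0 modTwo`. -/
def elliptic : SL(2, ZMod 16) := ⟨!![1, 1; -2, -1], by decide⟩

lemma expElliptic_mul {g h : SL(2, ZMod 16)} (hg : g ∈ Gamma0 modTwo) (hh : h ∈ Gamma0 modTwo) :
    expElliptic (g * h) = expElliptic g + expElliptic h := by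
  have hsixteen : (16 : ZMod 16) = 0 := rfl
  obtain ⟨e, he⟩ := exists_eq_two_mul hg
  obtain ⟨e', he'⟩ := exists_eq_two_mul hh
  obtain ⟨α, hα⟩ := exists_eq_two_mul_add_one (apply_zero_zero_of_mem_Gamma0 hg).1
  obtain ⟨α', hα'⟩ := exists_eq_two_mul_add_one (apply_zero_zero_of_mem_Gamma0 hh).1
  obtain ⟨δ, hδ⟩ := exists_eq_two_mul_add_one (apply_zero_zero_of_mem_Gamma0 hg).2
  obtain ⟨u, hu⟩ := exists_sq_eq_eight_mul_add_one (apply_zero_zero_of_mem_Gamma0 hh).1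
  obtain ⟨w, hw⟩ := exists_mul_add_one_eq_two_mul e'
  have hdet := det_fin_two_eq_one g
  simp only [expElliptic, mul_apply_zero_zero, mul_apply_one_zero, he, he'] at hdet ⊢
  generalize g 0 0 = a, g 0 1 = b, g 1 1 = d, h 0 0 = a' at *
  linear_combination 4 * a * e * hu + 4 * a' * e' * hdet + 8 * b * e' ^ 2 * hδ + 8 * b * hw +
    4 * (a' - 1) * hα + 8 * α * hα' +
    (2 * a * e * u + b * e * a' * e' + α * α' + b * (w + δ * e' ^ 2)) * hsixteen

lemma four_mul_apply_zero_zero {g : SL(2, ZMod 16)} (hg : g ∈ Gamma0 modTwo) :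
    4 * g 0 0 = 4 * g 1 1 + 4 * (g 0 1 * g 1 0) := by
  have hsixteen : (16 : ZMod 16) = 0 := rfl
  obtain ⟨e, he⟩ := exists_eq_two_mul hg
  obtain ⟨δ, hδ⟩ := exists_eq_two_mul_add_one (apply_zero_zero_of_mem_Gamma0 hg).2
  obtain ⟨w, hw⟩ := exists_sq_eq_eight_mul_add_one (apply_zero_zero_of_mem_Gamma0 hg).2
  have hdet := det_fin_two_eq_one g
  rw [he] at hdet ⊢
  linear_combination 4 * g 1 1 * hdet - 4 * g 0 0 * hw + 8 * g 0 1 * e * hδ +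
    (g 0 1 * e * δ - 2 * g 0 0 * w) * hsixteen

/-- The left side is the defect of additivity of `expUpper`. If `(b, d)` is the second column of `g`
and `(2 * ε, δ)` the second row of `h`, it is `4 * (b * (b + d)) * (ε * (ε + δ))` up to terms that
cancel, and `b * (b + d)` and `ε * (ε + δ)` are even. -/
lemma expUpper_mul_error {g h : SL(2, ZMod 16)} (hg : g ∈ Gamma0 modTwo) (hh : h ∈ Gamma0 modTwo)
    {e e' : ZMod 16} (he : g 1 0 = 2 * e) (he' : h 1 0 = 2 * e') :
    4 * g 0 1 * e' * (2 * g 0 0 * h 0 1 + g 0 1 * h 1 1 + 2 * e * h 0 0 + g 1 1 * e' +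
      g 0 0 * h 0 0 + g 0 1 * e') = 0 := by
  have hsixteen : (16 : ZMod 16) = 0 := rfl
  obtain ⟨α, hα⟩ := exists_eq_two_mul_add_one (apply_zero_zero_of_mem_Gamma0 hg).1
  obtain ⟨α', hα'⟩ := exists_eq_two_mul_add_one (apply_zero_zero_of_mem_Gamma0 hh).1
  obtain ⟨δ, hδ⟩ := exists_eq_two_mul_add_one (apply_zero_zero_of_mem_Gamma0 hg).2
  obtain ⟨δ', hδ'⟩ := exists_eq_two_mul_add_one (apply_zero_zero_of_mem_Gamma0 hh).2
  obtain ⟨r, hr⟩ := exists_mul_add_one_eq_two_mul (g 0 1)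
  obtain ⟨s, hs⟩ := exists_mul_add_one_eq_two_mul e'
  have ha := four_mul_apply_zero_zero hg
  have ha' := four_mul_apply_zero_zero hh
  rw [he] at ha
  rw [he'] at ha'
  generalize g 0 0 = a, g 0 1 = b, g 1 1 = d, h 0 0 = a', h 0 1 = b', h 1 1 = d' at *
  have hbd : b * (b + d) = 2 * (r + b * δ) := by linear_combination hr + b * hδ
  have hed : e' * (e' + d') = 2 * (s + e' * δ') := by linear_combination hs + e' * hδ'
  linear_combination 4 * e' * (e' + d') * hbd + 8 * (r + b * δ) * hed +
    b * e' * a' * ha + b * e' * d * ha' + 8 * b * e' * b' * hα + 8 * b * e' * e * (b + 1) * hα' +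
    8 * b * e' * b' * e' * hδ + 8 * e * e' * hr + 8 * b * b' * hs + ((r + b * δ) * (s + e' * δ') +
    b * e' * b' * α + b * e' * e * (b + 1) * α' + b * e' * b' * e' * δ +
    e * e' * r + b * b' * s) * hsixteen

lemma expUpper_mul {g h : SL(2, ZMod 16)} (hg : g ∈ Gamma0 modTwo) (hh : h ∈ Gamma0 modTwo) :
    expUpper (g * h) = expUpper g + expUpper h := by
  have hsixteen : (16 : ZMod 16) = 0 := rfl
  obtain ⟨e, he⟩ := exists_eq_two_mul hg
  obtain ⟨e', he'⟩ := exists_eq_two_mul hh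
  obtain ⟨u, hu⟩ := exists_sq_eq_eight_mul_add_one (apply_zero_zero_of_mem_Gamma0 hg).1
  obtain ⟨v, hv⟩ := exists_sq_eq_eight_mul_add_one (apply_zero_zero_of_mem_Gamma0 hh).1
  have herror := expUpper_mul_error hg hh he he'
  have hdet := det_fin_two_eq_one g
  have hdet' := det_fin_two_eq_one h
  simp only [expUpper, mul_apply_zero_zero, mul_apply_zero_one, mul_apply_one_zero, he, he']
    at hdet hdet' ⊢
  generalize g 0 0 = a, g 0 1 = b, g 1 1 = d, h 0 0 = a', h 0 1 = b', h 1 1 = d' at *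
  linear_combination herror + 2 * a' * b' * hu + 2 * a * b * hdet' + 2 * a * e * hv +
    2 * a' * e' * hdet + (a' ^ 2 - 1) * hu + 8 * u * hv +
    (u * a' * b' + a * e * v + 4 * u * v) * hsixteen

variable {S : Type*} [Semiring S]

/-- The linear character of `Gamma0 modTwo` with value `ψ (2 * k)` at `upper 1` and `ψ (-4 * m)` at
`elliptic`. -/
def linearCharacter (ψ : AddChar (ZMod 16) S) (k m : ZMod 16) : Gamma0 modTwo →* S where
  toFun g := ψ (k * expUpper g + m * expElliptic g)
  map_one' := by
    rw [show expUpper (1 : Gamma0 modTwo) = 0 by decide,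
      show expElliptic (1 : Gamma0 modTwo) = 0 by decide]
    simp
  map_mul' g h := by
    rw [Subgroup.coe_mul, expUpper_mul g.2 h.2, expElliptic_mul g.2 h.2, ← AddChar.map_add_eq_mul]
    ring_nf

lemma extendByZero_linearCharacter (ψ : AddChar (ZMod 16) S) (k m : ZMod 16) {x : SL(2, ZMod 16)}
    (hx : x ∈ Gamma0 modTwo) {p q : ZMod 16} (hp : expUpper x = p) (hq : expElliptic x = q) :
    extendByZero (linearCharacter ψ k m) x = ψ (k * p + m * q) := by
  rw [extendByZero_of_mem _ hx, ← hp, ← hq]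
  rfl

instance : DecidablePred (· ∈ Gamma0 modTwo) := fun g ↦ decEq (modTwo (g 1 0)) 0

lemma inducedRep_upper_two (ψ : AddChar (ZMod 16) S) (k m : ZMod 16) :
    inducedRep (isLeftTransversal_cosetRep modTwo) (linearCharacter ψ k m) (upper 2) =
      diagonal (Function.update (fun _ ↦ ψ (-2 * k - 4 * m)) 0 (ψ (4 * k))) := by
  ext i j
  rw [inducedRep_apply]
  by_cases hij : i = j
  · subst hij
    rw [extendByZero_linearCharacter ψ k m (p := ![4, -2, -2] i) (q := ![0, -4, -4] i)]
    · fin_cases i <;> simp <;> ring_nf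
    · decide +revert
    · decide +revert
    · decide +revert
  · rw [extendByZero_of_notMem, diagonal_apply_ne _ hij]
    decide +revert

variable {K : Type*} [Field K]

lemma inducedCharacter_upper_one (ψ : AddChar (ZMod 16) K) (k m : ZMod 16) :
    inducedCharacter (isLeftTransversal_cosetRep modTwo) (linearCharacter ψ k m)
      (MonoidAlgebra.of K SL(2, ZMod 16) (upper 1)) = ψ (2 * k) := by
  rw [inducedCharacter_of, Fin.sum_univ_three,
    extendByZero_linearCharacter ψ k m (p := 2) (q := 0) (by decide) (by decide) (by decide),
    extendByZero_of_notMem _ (by decide), extendByZero_of_notMem _ (by decide)]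
  ring_nf

lemma inducedCharacter_elliptic (ψ : AddChar (ZMod 16) K) (k m : ZMod 16) :
    inducedCharacter (isLeftTransversal_cosetRep modTwo) (linearCharacter ψ k m)
      (MonoidAlgebra.of K _ elliptic) = ψ (-4 * m) := by
  rw [inducedCharacter_of, Fin.sum_univ_three,
    extendByZero_linearCharacter ψ k m (p := 0) (q := -4) (by decide) (by decide) (by decide),
    extendByZero_of_notMem _ (by decide), extendByZero_of_notMem _ (by decide)]
  ring_nf

theorem exists_injective_addChar_zmod_sixteen (K : Type*) [Field K] [IsAlgClosed K]
    [NeZero (2 : K)] : ∃ ψ : AddChar (ZMod 16) K, Function.Injective ψ := by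
  have : NeZero ((16 : ℕ) : K) := ⟨by
    rw [show (16 : ℕ) = 2 ^ 4 by rfl, Nat.cast_pow]
    exact pow_ne_zero 4 (NeZero.ne 2)⟩
  obtain ⟨ζ, hζ⟩ := HasEnoughRootsOfUnity.exists_primitiveRoot K 16
  obtain ⟨ψ, hψ⟩ : ∃ ψ : AddChar (ZMod 16) K, ψ.IsPrimitive :=
    ⟨_, AddChar.zmodChar_primitive_of_primitive_root 16 hζ⟩
  refine ⟨ψ, fun x y hxy ↦ sub_eq_zero.mp ((hψ.zmod_char_eq_one_iff 16 (x - y)).mp ?_)⟩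
  rw [AddChar.map_sub_eq_div, hxy, div_self (ψ.val_isUnit y).ne_zero]

theorem lt_encard_irreducibleCharacters_zmod_sixteen (K : Type*) [Field K] [IsAlgClosed K]
    [NeZero (2 : K)] :
    16 < (irreducibleCharacters (Fin 3) K (MonoidAlgebra K SL(2, ZMod 16))).encard := by
  obtain ⟨ψ, hψ⟩ := exists_injective_addChar_zmod_sixteen K
  let Ind (i : Fin 8 × Fin 4) : MonoidAlgebra K SL(2, ZMod 16) →ₗ[K] K :=
    inducedCharacter (isLeftTransversal_cosetRep modTwo) (linearCharacter ψ i.1.val i.2.val)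
  have hInd : Function.Injective Ind := by
    rintro ⟨k, m⟩ ⟨k', m'⟩ h
    have hk : (2 * (k : ℕ) : ZMod 16) = 2 * (k' : ℕ) := hψ <| by
      simpa only [Ind, inducedCharacter_upper_one] using
        congr($h (MonoidAlgebra.of K _ (upper 1)))
    have hm : (-4 * (m : ℕ) : ZMod 16) = -4 * (m' : ℕ) := hψ <| by
      simpa only [Ind, inducedCharacter_elliptic] using
        congr($h (MonoidAlgebra.of K _ elliptic))
    have hk_inj : ∀ k k' : Fin 8, (2 * (k : ℕ) : ZMod 16) = 2 * (k' : ℕ) → k = k' := by decide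
    have hm_inj : ∀ m m' : Fin 4, (-4 * (m : ℕ) : ZMod 16) = -4 * (m' : ℕ) → m = m' := by decide
    exact Prod.ext (hk_inj k k' hk) (hm_inj m m' hm)
  let I : Finset (Fin 8 × Fin 4) := {i | (4 * (i.1 : ℕ) : ZMod 16) ≠ -2 * (i.1 : ℕ) - 4 * (i.2 : ℕ)}
  have hsub : Ind '' I ⊆ irreducibleCharacters (Fin 3) K (MonoidAlgebra K SL(2, ZMod 16)) := by
    rintro _ ⟨i, hi, rfl⟩
    exact inducedCharacter_mem_irreducibleCharacters _ (hψ.ne (Finset.mem_filter.mp hi).2)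
      (inducedRep_upper_two ψ _ _)
  calc (16 : ℕ∞) < I.card := by exact_mod_cast (by decide : 16 < I.card)
    _ = (Ind '' I).encard := by rw [hInd.encard_image, Set.encard_coe_eq_coe_finsetCard]
    _ ≤ _ := Set.encard_le_encard hsub

end Sixteen

section TruncatedPolynomial

open Polynomial

variable (F : Type*) [CommRing F] {r : ℕ} (hr : r ≠ 0)

/-- The constant coefficient of a truncated polynomial. -/
noncomputable def truncatedConstantCoeff : F[X] ⧸ Ideal.span {(X : F[X]) ^ r} →+* F :=
  Ideal.Quotient.lift _ constantCoeff fun p hp ↦ by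
    obtain ⟨q, rfl⟩ := Ideal.mem_span_singleton.mp hp
    simp [hr.symm]

lemma ker_truncatedConstantCoeff :
    RingHom.ker (truncatedConstantCoeff F hr) = Ideal.span {Ideal.Quotient.mk _ X} := by
  have hker : RingHom.ker (constantCoeff : F[X] →+* F) = Ideal.span {X} := by
    ext p
    rw [RingHom.mem_ker, Ideal.mem_span_singleton, X_dvd_iff, constantCoeff_apply]
  rw [truncatedConstantCoeff]
  refine (Ideal.ker_quotient_lift _ _).trans ?_
  rw [hker, Ideal.map_span, Set.image_singleton]

lemma isNilpotent_mk_X (r : ℕ) :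
    IsNilpotent (Ideal.Quotient.mk (Ideal.span {(X : F[X]) ^ r}) X) :=
  ⟨r, by rw [← map_pow, Ideal.Quotient.eq_zero_iff_mem]; exact Ideal.mem_span_singleton_self _⟩

lemma finite_truncatedPolynomial [Finite F] (r : ℕ) :
    Finite (F[X] ⧸ Ideal.span {(X : F[X]) ^ r}) :=
  have := (monic_X_pow (R := F) r).finite_quotient
  Module.finite_of_finite F

lemma charP_truncatedPolynomial {r : ℕ} (hr : r ≠ 0) (p : ℕ) [CharP F p] :
    CharP (F[X] ⧸ Ideal.span {(X : F[X]) ^ r}) p :=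
  have hinv : Function.LeftInverse (truncatedConstantCoeff F hr) (algebraMap F _) :=
    fun _ ↦ coeff_C_zero
  charP_of_injective_ringHom hinv.injective p

end TruncatedPolynomial

end GroupAlgebraSL2

open GroupAlgebraSL2

theorem statement1_general {K A R : Type*} [Field K] [IsAlgClosed K] [NeZero (2 : K)] [CommRing A]
    [CommRing R] [Finite R] [CharP R 2] (θ : A →+* ZMod 16) {π : R →+* ZMod 2} {t : R}
    (hπ : RingHom.ker π = Ideal.span {t}) (ht : IsNilpotent t)
    (φ : MonoidAlgebra K SL(2, R) →ₐ[K] MonoidAlgebra K SL(2, A)) : ¬ Function.Surjective φ := by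
  intro hφ
  have := isLocalRing_zmod_sixteen
  have hθ := mapDomainAlgHom_surjective (K := K)
    (map_surjective_of_isLocalRing (ZMod.ringHom_surjective θ))
  refine lt_irrefl (16 : ℕ∞) ?_
  calc 16
      < (irreducibleCharacters (Fin 3) K (MonoidAlgebra K SL(2, ZMod 16))).encard :=
        lt_encard_irreducibleCharacters_zmod_sixteen K
    _ ≤ (irreducibleCharacters (Fin 3) K (MonoidAlgebra K SL(2, A))).encard :=
        encard_irreducibleCharacters_le_of_surjective hθ
    _ ≤ (irreducibleCharacters (Fin 3) K (MonoidAlgebra K SL(2, R))).encard :=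
        encard_irreducibleCharacters_le_of_surjective hφ
    _ ≤ 16 := encard_irreducibleCharacters_le_of_charTwo hπ ht

/-- For every `r ≥ 4`, the group algebras `ℂ[SL₂(ℤ/2^rℤ)]` and
`ℂ[SL₂(𝔽₂[t]/(t^r))]` are not isomorphic as `ℂ`-algebras. -/
theorem statement1 (r : ℕ) (hr : 4 ≤ r) :
    ¬ Nonempty
      (MonoidAlgebra ℂ (Matrix.SpecialLinearGroup (Fin 2) (ZMod (2 ^ r))) ≃ₐ[ℂ]
        MonoidAlgebra ℂ
          (Matrix.SpecialLinearGroup (Fin 2)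
            (Polynomial (ZMod 2) ⧸ Ideal.span {(Polynomial.X : Polynomial (ZMod 2)) ^ r}))) := by
  rintro ⟨φ⟩
  have hr₀ : r ≠ 0 := by lia
  have := finite_truncatedPolynomial (ZMod 2) r
  have := charP_truncatedPolynomial (ZMod 2) hr₀ 2
  exact statement1_general (ZMod.castHom (pow_dvd_pow 2 hr) (ZMod 16))
    (ker_truncatedConstantCoeff (ZMod 2) hr₀)
    (isNilpotent_mk_X (ZMod 2) r) φ.symm.toAlgHom φ.symm.surjective
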